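/- ∑_{n=0}^∞ ((1)ₙ)³ (5/4)ₙ (7/4)ₙ / ((3/2)ₙ (3/2)ₙ (2)ₙ (2)ₙ n!) = −(8/3)·Li₂(3 − 2√2) + 2π²/9 − (8/3)·log²2 − (8/3)·log²(√2+1) + (16/3)·log(√2+1)·log 2. -/

import Mathlib

noncomputable def poch (a : ℝ) (n : ℕ) : ℝ := ∏ i ∈ Finset.range n, (a + i)

/-- Dilogarithm `Li₂(x) = ∑_{k ≥ 1} x^k / k²`. -/
noncomputable def Li2 (x : ℝ) : ℝ := ∑' k : ℕ, x ^ (k + 1) / ((k : ℝ) + 1)^2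

/-!
By the duplication formula the summands are, up to the factor `8 / 3`, the even coefficients of
`1 / √(1 - x)`, divided by `n + 1`, times the Wallis integrals of `sin θ ^ (2 * n + 1)` over
`[0, π / 2]`. Summing under the integral sign leaves
`∫ -2 * log (cos (θ / 2) * (1 + cos (θ / 2)) / 2) / sin θ`, which the substitution
`y = tan (θ / 4) ^ 2` turns into dilogarithms; the upper limit `θ = π / 2` gives `y = t ^ 2` with
`t = √2 - 1`. The remaining dilogarithms are removed by Abel's relation at `(t, t ^ 2)`, Landen's
identity at `t` and `t ^ 2`, and the functional equation of `χ₂`, whose involution fixes `t`.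
-/

section General

open Set Filter Topology

lemma hasDerivAt_tsum_div_succ_mul_pow_succ {𝕜 : Type*} [RCLike 𝕜] {a : ℕ → 𝕜} {C : ℝ}
    (ha : ∀ n, ‖a n‖ ≤ C) {x : 𝕜} (hx : ‖x‖ < 1) :
    HasDerivAt (fun y => ∑' n : ℕ, a n / (n + 1) * y ^ (n + 1)) (∑' n : ℕ, a n * x ^ n) x := by
  obtain ⟨ρ, hxρ, hρ⟩ := exists_between hx
  have hρ0 : 0 < ρ := (norm_nonneg x).trans_lt hxρ
  refine hasDerivAt_tsum_of_isPreconnected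
    (g := fun n y => a n / (n + 1) * y ^ (n + 1)) (g' := fun n y => a n * y ^ n)
    (t := Metric.ball (0 : 𝕜) ρ) (y₀ := 0)
    ((summable_geometric_of_lt_one hρ0.le hρ).mul_left C) Metric.isOpen_ball
    (Metric.isPreconnected_ball) (fun n y _ => ?_) (fun n y hy => ?_)
    (Metric.mem_ball_self hρ0) (by simp) (by simpa using hxρ)
  · have hn : (n : 𝕜) + 1 ≠ 0 := Nat.cast_add_one_ne_zero n
    refine ((hasDerivAt_pow (n + 1) y).const_mul (a n / (n + 1))).congr_deriv ?_
    push_cast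
    field_simp
  · rw [norm_mul, norm_pow]
    have hC : 0 ≤ C := (norm_nonneg _).trans (ha n)
    gcongr
    · exact ha n
    · exact (mem_ball_zero_iff.1 hy).le

lemma hasSum_even_pow {R : Type*} [CommRing R] [TopologicalSpace R] [ContinuousAdd R]
    {a : ℕ → R} {x s t : R} (hs : HasSum (fun k => a k * x ^ (k + 1)) s)
    (ht : HasSum (fun k => a k * (-x) ^ (k + 1)) t) :
    HasSum (fun n => 2 * a (2 * n + 1) * x ^ (2 * n + 2)) (s + t) := by
  have hinj : Function.Injective fun n : ℕ => 2 * n + 1 := fun m n h => by simpa using h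
  convert! (hinj.hasSum_iff fun k hk => ?_).2 (hs.add ht) using 2 with n
  · have heven : Even (2 * n + 1 + 1) := ⟨n + 1, by ring⟩
    rw [Function.comp_apply, heven.neg_pow]
    ring
  · have hodd : Odd (k + 1) :=
      (Nat.not_odd_iff_even.1 fun ⟨n, hn⟩ => hk ⟨n, hn.symm⟩).add_one
    rw [hodd.neg_pow]
    ring

lemma eq_of_hasDerivAt_zero {E : Type*} [NormedAddCommGroup E] [NormedSpace ℝ E] {f : ℝ → E}
    {a b : ℝ} (hab : a ≤ b) (hc : ContinuousOn f (Icc a b))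
    (hd : ∀ x ∈ Ioo a b, HasDerivAt f 0 x) : f b = f a := by
  rcases hab.eq_or_lt with rfl | hab
  · rfl
  have hright (x : ℝ) (hx : x ∈ Ioo a b) : f b = f x :=
    constant_of_has_deriv_right_zero (hc.mono (Icc_subset_Icc_left hx.1.le))
      (fun y hy => (hd y ⟨hx.1.trans_le hy.1, hy.2⟩).hasDerivWithinAt) b ⟨hx.2.le, le_rfl⟩
  have hlim : Tendsto f (𝓝[Ioo a b] a) (𝓝 (f a)) :=
    (hc a (left_mem_Icc.2 hab.le)).mono Ioo_subset_Icc_self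
  have : (𝓝[Ioo a b] a).NeBot := left_nhdsWithin_Ioo_neBot hab
  exact tendsto_nhds_unique
    (tendsto_const_nhds.congr' (eventually_nhdsWithin_of_forall hright)) hlim

lemma continuousAt_log_mul_zero {g : ℝ → ℝ} (hg : DifferentiableAt ℝ g 0) (h0 : g 0 = 0) :
    ContinuousAt (fun x => Real.log x * g x) 0 := by
  have hO : (fun x => Real.log x * g x) =O[𝓝 0] fun x => Real.log x * x :=
    (Asymptotics.isBigO_refl _ _).mul (by simpa [h0] using hg.isBigO_sub)
  have hlim : Tendsto (fun x : ℝ => Real.log x * x) (𝓝 0) (𝓝 0) := by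
    simpa [mul_comm] using Real.continuous_mul_log.tendsto 0
  simpa [ContinuousAt] using hO.trans_tendsto hlim

end General

section Dilogarithm

open Real Set

lemma summable_one_div_succ_sq : Summable fun n : ℕ => 1 / ((n : ℝ) + 1) ^ 2 := by
  simpa using (summable_nat_add_iff 1).2 (Real.summable_one_div_nat_pow.2 one_lt_two)

lemma norm_pow_succ_div_succ_sq_le {x : ℝ} (hx : |x| ≤ 1) (n : ℕ) :
    ‖x ^ (n + 1) / ((n : ℝ) + 1) ^ 2‖ ≤ 1 / ((n : ℝ) + 1) ^ 2 := by
  rw [norm_div, norm_pow, norm_eq_abs, norm_of_nonneg (by positivity : (0 : ℝ) ≤ (n + 1) ^ 2)]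
  gcongr
  exact pow_le_one₀ (abs_nonneg x) hx

lemma hasSum_Li2 {x : ℝ} (hx : |x| ≤ 1) :
    HasSum (fun n : ℕ => x ^ (n + 1) / ((n : ℝ) + 1) ^ 2) (Li2 x) :=
  (summable_one_div_succ_sq.of_norm_bounded (norm_pow_succ_div_succ_sq_le hx)).hasSum

lemma continuousOn_Li2 : ContinuousOn Li2 (Icc (-1) 1) :=
  continuousOn_tsum (fun _ => by fun_prop) summable_one_div_succ_sq fun n _ hx =>
    norm_pow_succ_div_succ_sq_le (abs_le.2 hx) n

lemma continuousOn_Li2_comp {f : ℝ → ℝ} {s : Set ℝ} (hf : ContinuousOn f s)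
    (hs : ∀ x ∈ s, f x ∈ Icc (-1) 1) : ContinuousOn (fun y => Li2 (f y)) s :=
  continuousOn_Li2.comp hf hs

lemma hasDerivAt_Li2 {x : ℝ} (hx : |x| < 1) (hx0 : x ≠ 0) :
    HasDerivAt Li2 (-log (1 - x) / x) x := by
  have hbound (n : ℕ) : ‖1 / ((n : ℝ) + 1)‖ ≤ 1 := by
    rw [norm_of_nonneg (by positivity), div_le_one (by positivity)]
    linarith [n.cast_nonneg (α := ℝ)]
  have hlog : HasSum (fun n : ℕ => 1 / ((n : ℝ) + 1) * x ^ n) (-log (1 - x) / x) := by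
    convert! (hasSum_pow_div_log_of_abs_lt_one hx).div_const x using 2 with n
    rw [pow_succ]
    field_simp
  have hderiv := hasDerivAt_tsum_div_succ_mul_pow_succ hbound hx
  rw [hlog.tsum_eq] at hderiv
  convert! hderiv using 1
  funext y
  refine tsum_congr fun n => ?_
  field_simp

lemma hasDerivAt_Li2_comp {f : ℝ → ℝ} {f' x : ℝ} (hf : HasDerivAt f f' x) (hx : |f x| < 1)
    (hx0 : f x ≠ 0) : HasDerivAt (fun y => Li2 (f y)) (-log (1 - f x) / f x * f') x :=
  (hasDerivAt_Li2 hx hx0).comp x hf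

lemma hasDerivAt_log_one_sub {x : ℝ} (hx : x ≠ 1) :
    HasDerivAt (fun y => log (1 - y)) (-1 / (1 - x)) x :=
  ((hasDerivAt_id' x).const_sub 1).log (sub_ne_zero.2 hx.symm)

lemma hasDerivAt_log_one_add {x : ℝ} (hx : x ≠ -1) :
    HasDerivAt (fun y => log (1 + y)) (1 / (1 + x)) x :=
  ((hasDerivAt_id' x).const_add 1).log fun h => hx (by linarith)

lemma Li2_zero : Li2 0 = 0 := by simp [Li2]

lemma Li2_one : Li2 1 = π ^ 2 / 6 := by
  have h := (hasSum_nat_add_iff' 1).2 hasSum_zeta_two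
  simpa [Li2] using h.tsum_eq

lemma Li2_add_Li2_neg {x : ℝ} (hx : |x| ≤ 1) : Li2 x + Li2 (-x) = Li2 (x ^ 2) / 2 := by
  have hcoeff {y : ℝ} (hy : |y| ≤ 1) :
      HasSum (fun k : ℕ => 1 / ((k : ℝ) + 1) ^ 2 * y ^ (k + 1)) (Li2 y) := by
    simpa only [one_div_mul_eq_div] using hasSum_Li2 hy
  have hsq : |x ^ 2| ≤ 1 := by rw [abs_pow]; exact pow_le_one₀ (abs_nonneg x) hx
  refine (hasSum_even_pow (hcoeff hx) (hcoeff (by rwa [abs_neg]))).unique ?_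
  convert! (hasSum_Li2 hsq).div_const 2 using 2 with n
  push_cast
  field_simp
  ring

lemma Li2_neg_one : Li2 (-1) = -π ^ 2 / 12 := by
  have h := Li2_add_Li2_neg (x := 1) (by norm_num)
  rw [one_pow, Li2_one] at h
  linarith

/-- Euler's reflection formula. -/
lemma Li2_add_Li2_one_sub {x : ℝ} (h0 : 0 ≤ x) (h1 : x < 1) :
    Li2 x + Li2 (1 - x) = π ^ 2 / 6 - log x * log (1 - x) := by
  have hconst := eq_of_hasDerivAt_zero
    (f := fun x => Li2 x + Li2 (1 - x) + log x * log (1 - x)) h0 ?_ ?_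
  · simp only [sub_zero, log_one, mul_zero, add_zero, Li2_zero, Li2_one, zero_add] at hconst
    linarith
  · refine ((continuousOn_Li2.mono ?_).add (continuousOn_Li2_comp (by fun_prop) ?_)).add ?_
    · exact Icc_subset_Icc (by norm_num) h1.le
    · rintro y ⟨hy0, hyx⟩
      constructor <;> linarith
    · rintro y ⟨hy0, hyx⟩
      have hlog := hasDerivAt_log_one_sub (x := y) (by linarith)
      refine ContinuousAt.continuousWithinAt ?_
      rcases hy0.eq_or_lt with rfl | hy0
      · exact continuousAt_log_mul_zero hlog.differentiableAt (by simp)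
      · exact (continuousAt_log hy0.ne').mul hlog.continuousAt
  · rintro y ⟨hy0, hyx⟩
    have h1y : 0 < 1 - y := by linarith
    refine (((hasDerivAt_Li2 (by rw [abs_of_pos] <;> linarith) hy0.ne').add
      (hasDerivAt_Li2_comp ((hasDerivAt_id' y).const_sub 1) (by rw [abs_of_pos] <;> linarith)
        h1y.ne')).add
      ((hasDerivAt_log hy0.ne').mul (hasDerivAt_log_one_sub (by linarith)))).congr_deriv ?_
    rw [sub_sub_cancel]
    field_simp
    ring

lemma Li2_half : Li2 (1 / 2) = π ^ 2 / 12 - log 2 ^ 2 / 2 := by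
  have h := Li2_add_Li2_one_sub (x := 1 / 2) (by norm_num) (by norm_num)
  rw [show (1 : ℝ) - 1 / 2 = 1 / 2 by norm_num, one_div, log_inv] at h
  rw [one_div]
  linarith

/-- Landen's identity. -/
lemma Li2_neg_add_Li2_div_one_add {x : ℝ} (h0 : 0 ≤ x) (h1 : x ≤ 1) :
    Li2 (-x) + Li2 (x / (1 + x)) = -log (1 + x) ^ 2 / 2 := by
  have hdiv {y : ℝ} (hy : 0 ≤ y) : HasDerivAt (fun y => y / (1 + y)) (1 / (1 + y) ^ 2) y := by
    refine ((hasDerivAt_id' y).div ((hasDerivAt_id' y).const_add 1)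
      (add_pos_of_pos_of_nonneg one_pos hy).ne').congr_deriv ?_
    ring
  have hlt {y : ℝ} (hy : 0 ≤ y) : y / (1 + y) < 1 := by
    rw [div_lt_one (by positivity)]
    linarith
  have hconst := eq_of_hasDerivAt_zero
    (f := fun x => Li2 (-x) + Li2 (x / (1 + x)) + log (1 + x) ^ 2 / 2) h0 ?_ ?_
  · norm_num [Li2_zero] at hconst
    linarith
  · refine ((continuousOn_Li2_comp (by fun_prop) ?_).add
      (continuousOn_Li2_comp (fun y hy => (hdiv hy.1).continuousAt.continuousWithinAt) ?_)).add
      fun y hy => (((hasDerivAt_log_one_add (by linarith [hy.1])).continuousAt.pow 2).div_const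
        2).continuousWithinAt
    · rintro y ⟨hy0, hyx⟩
      constructor <;> linarith
    · rintro y ⟨hy0, -⟩
      exact ⟨by linarith [show 0 ≤ y / (1 + y) by positivity], (hlt hy0).le⟩
  · rintro y ⟨hy0, hyx⟩
    have hpos : 0 < y / (1 + y) := by positivity
    refine (((hasDerivAt_Li2_comp (hasDerivAt_neg' y) (by rw [abs_neg, abs_of_pos] <;> linarith)
      (neg_ne_zero.2 hy0.ne')).add
      (hasDerivAt_Li2_comp (hdiv hy0.le) (by rw [abs_of_pos hpos]; exact hlt hy0.le)
        hpos.ne')).add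
      (((hasDerivAt_log_one_add (by linarith)).fun_pow 2).div_const 2)).congr_deriv ?_
    rw [show 1 - y / (1 + y) = (1 + y)⁻¹ by field_simp; ring, log_inv, sub_neg_eq_add]
    field_simp
    ring

lemma hasDerivAt_div_one_sub (y : ℝ) {x : ℝ} (hx : x ≠ 1) :
    HasDerivAt (fun z => y / (1 - z)) (y / (1 - x) ^ 2) x := by
  refine ((hasDerivAt_const x y).div ((hasDerivAt_id' x).const_sub 1)
    (sub_ne_zero.2 hx.symm)).congr_deriv ?_
  ring

lemma hasDerivAt_div_one_sub_self {x : ℝ} (hx : x ≠ 1) :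
    HasDerivAt (fun z => z / (1 - z)) (1 / (1 - x) ^ 2) x := by
  refine ((hasDerivAt_id' x).div ((hasDerivAt_id' x).const_sub 1)
    (sub_ne_zero.2 hx.symm)).congr_deriv ?_
  ring

lemma div_one_sub_mem_Ico {x y : ℝ} (hx : 0 ≤ x) (hxy : x + y < 1) :
    x / (1 - y) ∈ Ico 0 1 := by
  have h1y : 0 < 1 - y := by linarith
  exact ⟨by positivity, (div_lt_one h1y).2 (by linarith)⟩

lemma div_one_sub_mul_div_one_sub_mem_Ico {x y : ℝ} (hx : 0 ≤ x) (hy : 0 ≤ y)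
    (hxy : x + y < 1) : x / (1 - x) * (y / (1 - y)) ∈ Ico 0 1 := by
  have h1x : 0 < 1 - x := by linarith
  have h1y : 0 < 1 - y := by linarith
  refine ⟨by positivity, ?_⟩
  rw [div_mul_div_comm, div_lt_one (by positivity)]
  linarith

lemma continuousOn_Li2_five_term {x y : ℝ} (hy : 0 ≤ y) (hxy : x + y < 1) :
    ContinuousOn
      (fun z => Li2 (z / (1 - y)) + Li2 (y / (1 - z)) - Li2 (z / (1 - z) * (y / (1 - y))))
      (Icc 0 x) := by
  have hmem : Ico (0 : ℝ) 1 ⊆ Icc (-1) 1 := fun z hz => ⟨by linarith [hz.1], hz.2.le⟩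
  refine ((continuousOn_Li2_comp (by fun_prop) ?_).add (continuousOn_Li2_comp (fun z hz =>
    (hasDerivAt_div_one_sub y (by linarith [hz.2])).continuousAt.continuousWithinAt) ?_)).sub
    (continuousOn_Li2_comp (fun z hz => ((hasDerivAt_div_one_sub_self
      (by linarith [hz.2])).mul_const _).continuousAt.continuousWithinAt) ?_)
  · exact fun z hz => hmem (div_one_sub_mem_Ico hz.1 (by linarith [hz.2]))
  · exact fun z hz => hmem (div_one_sub_mem_Ico hy (by linarith [hz.2]))
  · exact fun z hz => hmem (div_one_sub_mul_div_one_sub_mem_Ico hz.1 hy (by linarith [hz.2]))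

lemma hasDerivAt_Li2_five_term {x y : ℝ} (hx : 0 < x) (hy : 0 < y) (hxy : x + y < 1) :
    HasDerivAt
      (fun z => Li2 (z / (1 - y)) + Li2 (y / (1 - z)) - Li2 (z / (1 - z) * (y / (1 - y))))
      (-log (1 - x) / x - log (1 - y) / (1 - x)) x := by
  have h1x : 0 < 1 - x := by linarith
  have h1y : 0 < 1 - y := by linarith
  have hyx : 0 < 1 - y - x := by linarith
  have hu : 0 < x / (1 - y) := by positivity
  have hv : 0 < y / (1 - x) := by positivity
  have hw : 0 < x / (1 - x) * (y / (1 - y)) := by positivity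
  have hu1 := (div_one_sub_mem_Ico hx.le hxy).2
  have hv1 := (div_one_sub_mem_Ico (y := x) hy.le (by linarith)).2
  have hw1 := (div_one_sub_mul_div_one_sub_mem_Ico hx.le hy.le hxy).2
  refine (((hasDerivAt_Li2_comp ((hasDerivAt_id' x).div_const (1 - y))
    (by rwa [abs_of_pos hu]) hu.ne').add
    (hasDerivAt_Li2_comp (hasDerivAt_div_one_sub y (by linarith))
      (by rwa [abs_of_pos hv]) hv.ne')).sub
    (hasDerivAt_Li2_comp ((hasDerivAt_div_one_sub_self (by linarith)).mul_const (y / (1 - y)))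
      (by rwa [abs_of_pos hw]) hw.ne')).congr_deriv ?_
  rw [show 1 - x / (1 - y) = (1 - y - x) / (1 - y) by field_simp,
    show 1 - y / (1 - x) = (1 - y - x) / (1 - x) by field_simp; ring,
    show 1 - x / (1 - x) * (y / (1 - y)) = (1 - y - x) / ((1 - x) * (1 - y)) by
      field_simp; ring,
    log_div hyx.ne' h1y.ne', log_div hyx.ne' h1x.ne', log_div hyx.ne' (by positivity),
    log_mul h1x.ne' h1y.ne']
  field_simp
  ring

/-- Abel's form of the five-term relation. -/
lemma Li2_five_term {x y : ℝ} (hx : 0 < x) (hy : 0 < y) (hxy : x + y < 1) :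
    Li2 (x / (1 - y)) + Li2 (y / (1 - x)) - Li2 (x / (1 - x) * (y / (1 - y)))
      = Li2 x + Li2 y + log (1 - x) * log (1 - y) := by
  have hconst := eq_of_hasDerivAt_zero
    (f := fun z => Li2 (z / (1 - y)) + Li2 (y / (1 - z)) - Li2 (z / (1 - z) * (y / (1 - y)))
      - (Li2 z + log (1 - z) * log (1 - y))) hx.le ?_ ?_
  · norm_num [Li2_zero] at hconst
    linarith
  · exact (continuousOn_Li2_five_term hy.le hxy).sub
      ((continuousOn_Li2.mono (Icc_subset_Icc (by norm_num) (by linarith))).add fun z hz =>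
        ((hasDerivAt_log_one_sub (by linarith [hz.2])).mul_const
          _).continuousAt.continuousWithinAt)
  · rintro z ⟨hz0, hzx⟩
    refine ((hasDerivAt_Li2_five_term hz0 hy (by linarith)).sub
      ((hasDerivAt_Li2 (by rw [abs_of_pos hz0]; linarith) hz0.ne').add
        ((hasDerivAt_log_one_sub (by linarith)).mul_const (log (1 - y))))).congr_deriv ?_
    ring

/-- Legendre's chi function `χ₂`, the odd part of the dilogarithm. -/
noncomputable def legendreChi (x : ℝ) : ℝ := (Li2 x - Li2 (-x)) / 2

lemma legendreChi_zero : legendreChi 0 = 0 := by simp [legendreChi]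

lemma legendreChi_one : legendreChi 1 = π ^ 2 / 8 := by
  rw [legendreChi, Li2_one, Li2_neg_one]
  ring

lemma continuousOn_legendreChi : ContinuousOn legendreChi (Icc (-1) 1) :=
  (continuousOn_Li2.sub (continuousOn_Li2_comp (by fun_prop) fun x hx =>
    ⟨by linarith [hx.2], by linarith [hx.1]⟩)).div_const 2

lemma hasDerivAt_legendreChi {x : ℝ} (hx : |x| < 1) (hx0 : x ≠ 0) :
    HasDerivAt legendreChi (log ((1 + x) / (1 - x)) / (2 * x)) x := by
  obtain ⟨hlt, hgt⟩ := abs_lt.1 hx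
  refine (((hasDerivAt_Li2 hx hx0).sub (hasDerivAt_Li2_comp (hasDerivAt_neg' x)
    (by rwa [abs_neg]) (neg_ne_zero.2 hx0))).div_const 2).congr_deriv ?_
  rw [sub_neg_eq_add, log_div (by linarith) (by linarith)]
  field_simp
  ring

lemma one_sub_div_one_add_lt_one {x : ℝ} (hx : 0 < x) : (1 - x) / (1 + x) < 1 := by
  rw [div_lt_one (by positivity)]
  linarith

lemma hasDerivAt_one_sub_div_one_add {x : ℝ} (hx : x ≠ -1) :
    HasDerivAt (fun y => (1 - y) / (1 + y)) (-2 / (1 + x) ^ 2) x := by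
  refine (((hasDerivAt_id' x).const_sub 1).div ((hasDerivAt_id' x).const_add 1)
    fun h => hx (by linarith)).congr_deriv ?_
  ring

lemma hasDerivAt_log_one_sub_div_one_add {x : ℝ} (hx : |x| < 1) :
    HasDerivAt (fun y => log ((1 - y) / (1 + y))) (-2 / ((1 - x) * (1 + x))) x := by
  obtain ⟨hlt, hgt⟩ := abs_lt.1 hx
  have h2 : 0 < 1 + x := by linarith
  refine ((hasDerivAt_one_sub_div_one_add hlt.ne').log (by positivity)).congr_deriv ?_
  field_simp

/-- Euler's functional equation of `χ₂`. -/
lemma legendreChi_add_legendreChi_one_sub_div_one_add {x : ℝ} (h0 : 0 ≤ x) (h1 : x < 1) :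
    legendreChi x + legendreChi ((1 - x) / (1 + x))
      = π ^ 2 / 8 - log x * log ((1 - x) / (1 + x)) / 2 := by
  have hle {y : ℝ} (hy : 0 ≤ y) : (1 - y) / (1 + y) ≤ 1 := by
    rw [div_le_one (by positivity)]
    linarith
  have hconst := eq_of_hasDerivAt_zero (f := fun x => legendreChi x
    + legendreChi ((1 - x) / (1 + x)) + log x * log ((1 - x) / (1 + x)) / 2) h0 ?_ ?_
  · norm_num [legendreChi_zero, legendreChi_one] at hconst
    linarith
  · refine ((continuousOn_legendreChi.mono ?_).add
      (continuousOn_legendreChi.comp (fun y hy =>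
        (hasDerivAt_one_sub_div_one_add (by linarith [hy.1])).continuousAt.continuousWithinAt)
        ?_)).add ?_
    · exact Icc_subset_Icc (by norm_num) h1.le
    · rintro y ⟨hy0, hyx⟩
      have : 0 ≤ 1 - y := by linarith
      exact ⟨by linarith [show 0 ≤ (1 - y) / (1 + y) by positivity], hle hy0⟩
    · rintro y ⟨hy0, hyx⟩
      have hlog := hasDerivAt_log_one_sub_div_one_add (x := y) (by rw [abs_of_nonneg] <;> linarith)
      refine (ContinuousAt.div_const ?_ 2).continuousWithinAt
      rcases hy0.eq_or_lt with rfl | hy0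
      · exact continuousAt_log_mul_zero hlog.differentiableAt (by simp)
      · exact (continuousAt_log hy0.ne').mul hlog.continuousAt
  · rintro y ⟨hy0, hyx⟩
    have h1y : 0 < 1 - y := by linarith
    have hy : |y| < 1 := by rw [abs_of_pos hy0]; linarith
    have hw : 0 < (1 - y) / (1 + y) := by positivity
    have hw1 := one_sub_div_one_add_lt_one hy0
    refine (((hasDerivAt_legendreChi hy hy0.ne').add
      ((hasDerivAt_legendreChi (by rwa [abs_of_pos hw]) hw.ne').comp y
        (hasDerivAt_one_sub_div_one_add (by linarith)))).add
      (((hasDerivAt_log hy0.ne').mul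
        (hasDerivAt_log_one_sub_div_one_add hy)).div_const 2)).congr_deriv ?_
    rw [show 1 + (1 - y) / (1 + y) = 2 / (1 + y) by field_simp; ring,
      show 1 - (1 - y) / (1 + y) = 2 * y / (1 + y) by field_simp; ring,
      show 2 / (1 + y) / (2 * y / (1 + y)) = y⁻¹ by field_simp,
      ← inv_div (1 - y) (1 + y), log_inv, log_inv]
    field_simp
    ring

lemma two_mul_Li2_add_Li2_sq_sub_Li2_neg_sq {t : ℝ} (h0 : 0 < t) (ht : t ^ 2 + 2 * t = 1) :
    2 * Li2 t + Li2 (t ^ 2) - Li2 (-t ^ 2) = 5 * π ^ 2 / 24 - log t ^ 2 := by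
  have h1 : t < 1 := by nlinarith
  have h1t : 1 - t = t * (1 + t) := by linarith
  have h1t2 : 1 - t ^ 2 = 2 * t := by linarith
  have hlog1 : log (1 + t) = log 2 / 2 := by
    have h := log_pow (1 + t) 2
    rw [show (1 + t) ^ 2 = 2 by linarith] at h
    push_cast at h
    linarith
  have hlog2 : log (1 + t ^ 2) = 3 / 2 * log 2 + log t := by
    rw [show 1 + t ^ 2 = 2 * t * (1 + t) by linarith, log_mul (by positivity) (by positivity),
      log_mul two_ne_zero h0.ne', hlog1]
    ring
  have habel : Li2 (1 / 2) + Li2 (t / (1 + t)) - Li2 (t ^ 2 / (1 + t ^ 2))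
      = Li2 t + Li2 (t ^ 2) + (log t + log 2 / 2) * (log 2 + log t) := by
    have h := Li2_five_term h0 (pow_pos h0 2) (by linarith)
    rw [h1t, h1t2, log_mul h0.ne' (by positivity), log_mul two_ne_zero h0.ne', hlog1] at h
    convert h using 3
    · congr 1
      field_simp
    · congr 1
      field_simp
    · rw [show 1 + t ^ 2 = 2 * t * (1 + t) by linarith]
      field_simp
  have hlanden := Li2_neg_add_Li2_div_one_add h0.le h1.le
  have hlanden_sq := Li2_neg_add_Li2_div_one_add (sq_nonneg t) (pow_le_one₀ h0.le h1.le)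
  have hchi := legendreChi_add_legendreChi_one_sub_div_one_add h0.le h1
  rw [show (1 - t) / (1 + t) = t by rw [h1t]; field_simp] at hchi
  simp only [legendreChi] at hchi
  rw [hlog1] at hlanden
  rw [hlog2] at hlanden_sq
  rw [Li2_half] at habel
  linear_combination -habel + hlanden - hlanden_sq + hchi

end Dilogarithm

section Pochhammer

open Finset

lemma poch_zero (a : ℝ) : poch a 0 = 1 := prod_range_zero _

lemma poch_succ (a : ℝ) (n : ℕ) : poch a (n + 1) = poch a n * (a + n) := prod_range_succ _ _

lemma poch_succ_left (a : ℝ) (n : ℕ) : poch a (n + 1) = a * poch (a + 1) n := by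
  rw [poch, prod_range_succ', mul_comm, poch]
  push_cast
  simp only [add_zero, add_assoc, add_comm (1 : ℝ)]

lemma poch_pos {a : ℝ} (ha : 0 < a) (n : ℕ) : 0 < poch a n := prod_pos fun _ _ => by positivity

lemma poch_le_poch {a b : ℝ} (ha : 0 ≤ a) (hab : a ≤ b) (n : ℕ) : poch a n ≤ poch b n :=
  prod_le_prod (fun _ _ => by positivity) fun _ _ => by gcongr

lemma poch_mul_poch_le_sq {a b : ℝ} (ha : 0 ≤ a) (hb : 0 ≤ b) (n : ℕ) :
    poch a n * poch b n ≤ poch ((a + b) / 2) n ^ 2 := by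
  rw [poch, poch, poch, ← prod_mul_distrib, ← prod_pow]
  refine prod_le_prod (fun _ _ => by positivity) fun i _ => ?_
  linarith [sq_nonneg (a - b)]

lemma poch_one (n : ℕ) : poch 1 n = n.factorial := by
  induction n with
  | zero => simp [poch_zero]
  | succ n ih =>
    rw [poch_succ, ih, Nat.factorial_succ]
    push_cast
    ring

lemma poch_two (n : ℕ) : poch 2 n = (n + 1).factorial := by
  rw [← poch_one, poch_succ_left, one_mul, one_add_one_eq_two]

/-- Legendre's duplication formula. -/
lemma poch_two_mul (a : ℝ) (n : ℕ) :
    poch a (2 * n) = 4 ^ n * poch (a / 2) n * poch ((a + 1) / 2) n := by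
  induction n with
  | zero => simp [poch_zero]
  | succ n ih =>
    rw [Nat.mul_succ, poch_succ, poch_succ, ih, poch_succ, poch_succ]
    push_cast
    ring

lemma poch_eq_ascPochhammer_eval (a : ℝ) (n : ℕ) : poch a n = (ascPochhammer ℝ n).eval a := by
  induction n with
  | zero => simp [poch_zero]
  | succ n ih => rw [poch_succ, ih, ascPochhammer_succ_eval]

lemma poch_div_factorial_eq_choose (a : ℝ) (n : ℕ) :
    poch a n / n.factorial = Ring.choose (a + n - 1) n := by
  have h := Ring.factorial_nsmul_multichoose_eq_ascPochhammer a n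
  rw [Polynomial.ascPochhammer_smeval_eq_eval, ← poch_eq_ascPochhammer_eval, nsmul_eq_mul] at h
  rw [← Ring.multichoose_eq, ← h]
  field_simp

lemma hasSum_poch_div_factorial_mul_pow (a : ℝ) {x : ℝ} (hx : |x| < 1) :
    HasSum (fun n => poch a n / n.factorial * x ^ n) (1 / (1 - x) ^ a) := by
  have h := (Real.one_div_one_sub_rpow_hasFPowerSeriesOnBall_zero a).hasSum (y := x)
    (by simpa [← enorm_eq_nnnorm, Real.enorm_eq_ofReal_abs] using hx)
  simpa only [zero_add, FormalMultilinearSeries.ofScalars_apply_eq, smul_eq_mul,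
    ← poch_div_factorial_eq_choose] using h

end Pochhammer

section InvSqrt

open Real

/-- Coefficients of the power series of `1 / √(1 - x)`. -/
noncomputable def invSqrtCoeff (k : ℕ) : ℝ := poch (1 / 2) k / k.factorial

lemma invSqrtCoeff_zero : invSqrtCoeff 0 = 1 := by simp [invSqrtCoeff, poch_zero]

lemma invSqrtCoeff_one : invSqrtCoeff 1 = 1 / 2 := by simp [invSqrtCoeff, poch]

lemma invSqrtCoeff_nonneg (k : ℕ) : 0 ≤ invSqrtCoeff k :=
  div_nonneg (poch_pos (by norm_num) k).le (by positivity)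

lemma norm_invSqrtCoeff_le_one (k : ℕ) : ‖invSqrtCoeff k‖ ≤ 1 := by
  rw [norm_of_nonneg (invSqrtCoeff_nonneg k), invSqrtCoeff, ← poch_one]
  exact div_le_one_of_le₀ (poch_le_poch (by norm_num) (by norm_num) k)
    (poch_pos one_pos k).le

lemma invSqrtCoeff_two_mul_add_two (n : ℕ) :
    invSqrtCoeff (2 * n + 2)
      = 3 / 8 * (poch (5 / 4) n * poch (7 / 4) n / (poch (3 / 2) n * (n + 1).factorial)) := by
  rw [invSqrtCoeff, ← poch_one, ← Nat.mul_succ, poch_two_mul, poch_two_mul,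
    poch_succ_left (1 / 2 / 2), poch_succ_left ((1 / 2 + 1) / 2), poch_succ_left (1 / 2)]
  norm_num [poch_one]
  field_simp
  ring

lemma hasSum_invSqrtCoeff {x : ℝ} (hx : |x| < 1) :
    HasSum (fun k => invSqrtCoeff k * x ^ k) (1 / √(1 - x)) := by
  rw [sqrt_eq_rpow]
  exact hasSum_poch_div_factorial_mul_pow (1 / 2) hx

lemma tsum_invSqrtCoeff_succ {x : ℝ} (hx : |x| < 1) :
    ∑' k, invSqrtCoeff (k + 1) * x ^ k = 1 / (√(1 - x) * (1 + √(1 - x))) := by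
  rcases eq_or_ne x 0 with rfl | hx0
  · rw [tsum_eq_single 0 fun k hk => by simp [hk]]
    norm_num [invSqrtCoeff_one]
  have h1x : 0 < 1 - x := by linarith [le_abs_self x]
  have hsum := ((hasSum_nat_add_iff' 1).2 (hasSum_invSqrtCoeff hx)).div_const x
  convert! hsum.tsum_eq using 1
  · refine tsum_congr fun k => ?_
    rw [pow_succ]
    field_simp
  · rw [Finset.sum_range_one, invSqrtCoeff_zero, pow_zero, eq_div_iff hx0]
    field_simp
    linarith [sq_sqrt h1x.le]

lemma tsum_invSqrtCoeff_succ_div {x : ℝ} (hx : |x| < 1) :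
    ∑' k : ℕ, invSqrtCoeff (k + 1) / (k + 1) * x ^ (k + 1) = -2 * log ((1 + √(1 - x)) / 2) := by
  set f : ℝ → ℝ := fun y => ∑' k : ℕ, invSqrtCoeff (k + 1) / (k + 1) * y ^ (k + 1)
    + 2 * log ((1 + √(1 - y)) / 2) with hf
  have hderiv {y : ℝ} (hy : y ∈ Metric.ball 0 1) : HasDerivAt f 0 y := by
    rw [mem_ball_zero_iff, norm_eq_abs] at hy
    have h1y : 0 < 1 - y := by linarith [le_abs_self y]
    refine ((hasDerivAt_tsum_div_succ_mul_pow_succ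
      (fun k => norm_invSqrtCoeff_le_one (k + 1)) hy).add
      ((((((hasDerivAt_id' y).const_sub 1).sqrt h1y.ne').const_add 1).div_const 2).log
        (by positivity) |>.const_mul 2)).congr_deriv ?_
    rw [tsum_invSqrtCoeff_succ hy]
    field_simp
    ring
  have hconst : f x = f 0 := Metric.isOpen_ball.is_const_of_deriv_eq_zero
    Metric.isPreconnected_ball
    (fun y hy => (hderiv hy).differentiableAt.differentiableWithinAt)
    (fun y hy => (hderiv hy).deriv) (by simpa using hx) (Metric.mem_ball_self one_pos)
  norm_num [hf] at hconst
  linarith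

lemma hasSum_invSqrtCoeff_succ_div {x : ℝ} (hx : |x| < 1) :
    HasSum (fun k : ℕ => invSqrtCoeff (k + 1) / (k + 1) * x ^ (k + 1))
      (-2 * log ((1 + √(1 - x)) / 2)) := by
  rw [← tsum_invSqrtCoeff_succ_div hx]
  refine Summable.hasSum (((summable_nat_add_iff 1).2
    (summable_geometric_of_lt_one (abs_nonneg x) hx)).of_norm_bounded fun k => ?_)
  rw [norm_mul, norm_div, norm_pow, norm_eq_abs x, norm_of_nonneg (by positivity : (0 : ℝ) ≤ k + 1)]
  refine mul_le_of_le_one_left (by positivity) (div_le_one_of_le₀ ?_ (by positivity))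
  exact (norm_invSqrtCoeff_le_one _).trans (by linarith [k.cast_nonneg (α := ℝ)])

lemma hasSum_invSqrtCoeff_even_div {x : ℝ} (hx : |x| < 1) :
    HasSum (fun n : ℕ => invSqrtCoeff (2 * n + 2) / (n + 1) * x ^ (2 * n + 2))
      (-2 * log ((1 + √(1 - x)) * (1 + √(1 + x)) / 4)) := by
  have hlog : -2 * log ((1 + √(1 - x)) * (1 + √(1 + x)) / 4)
      = -2 * log ((1 + √(1 - x)) / 2) + -2 * log ((1 + √(1 - -x)) / 2) := by
    rw [sub_neg_eq_add, ← mul_add, ← log_mul (by positivity) (by positivity)]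
    ring_nf
  rw [hlog]
  convert! hasSum_even_pow (hasSum_invSqrtCoeff_succ_div hx)
    (hasSum_invSqrtCoeff_succ_div (by rwa [abs_neg])) using 2 with n
  push_cast
  field_simp
  ring

end InvSqrt

section Wallis

open Real Set MeasureTheory

/-- Wallis' integral. -/
lemma integral_sin_pow_odd_quarter (n : ℕ) :
    ∫ θ in 0..π / 2, sin θ ^ (2 * n + 1) = n.factorial / poch (3 / 2) n := by
  induction n with
  | zero => simp [poch_zero]
  | succ n ih =>
    rw [show 2 * (n + 1) + 1 = 2 * n + 1 + 2 by ring, integral_sin_pow, ih, poch_succ,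
      Nat.factorial_succ]
    have := poch_pos (a := 3 / 2) (by norm_num) n
    simp only [sin_zero, cos_zero, cos_pi_div_two]
    push_cast
    field_simp
    ring

lemma hasSum_integral_tsum_sin_pow_odd {a : ℕ → ℝ}
    (ha : Summable fun n => a n * (n.factorial / poch (3 / 2) n)) :
    HasSum (fun n => a n * (n.factorial / poch (3 / 2) n))
      (∫ θ in 0..π / 2, ∑' n, a n * sin θ ^ (2 * n + 1)) := by
  have hpi : 0 ≤ π / 2 := by positivity
  have hterm (b : ℝ) (n : ℕ) : ∫ θ in Ioc 0 (π / 2), b * sin θ ^ (2 * n + 1)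
      = b * (n.factorial / poch (3 / 2) n) := by
    rw [integral_const_mul, ← intervalIntegral.integral_of_le hpi, integral_sin_pow_odd_quarter]
  have hnorm (n : ℕ) : ∫ θ in Ioc 0 (π / 2), ‖a n * sin θ ^ (2 * n + 1)‖
      = ‖a n * (n.factorial / poch (3 / 2) n)‖ := by
    have hwallis : 0 ≤ n.factorial / poch (3 / 2) n :=
      div_nonneg (by positivity) (poch_pos (by norm_num) n).le
    rw [norm_mul, norm_of_nonneg hwallis, ← hterm]
    refine setIntegral_congr_fun measurableSet_Ioc fun θ hθ => ?_
    have hsin : 0 ≤ sin θ := sin_nonneg_of_nonneg_of_le_pi hθ.1.le (by linarith [hθ.2, pi_pos])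
    rw [norm_mul, norm_of_nonneg (pow_nonneg hsin _)]
  rw [intervalIntegral.integral_of_le hpi]
  simpa only [hterm] using hasSum_integral_of_summable_integral_norm
    (μ := volume.restrict (Ioc 0 (π / 2))) (F := fun n θ => a n * sin θ ^ (2 * n + 1))
    (fun n => (Continuous.integrableOn_Icc (by fun_prop)).mono_set Ioc_subset_Icc_self)
    (by simpa only [hnorm] using ha.norm)

end Wallis

section Evaluation

open Real Set

/-- An antiderivative of `(log (1 - y) - 2 * log (1 + y)) * (1 + y) / (y * (1 - y))`, the integrand
to which the substitution `y = tan (θ / 4) ^ 2` leads. -/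
noncomputable def dilogPrimitive (y : ℝ) : ℝ :=
  -Li2 y + 2 * Li2 (-y) - log (1 - y) ^ 2 - 4 * (Li2 ((1 - y) / 2) - log 2 * log (1 - y))

lemma hasDerivAt_dilogPrimitive {y : ℝ} (h0 : 0 < y) (h1 : y < 1) :
    HasDerivAt dilogPrimitive
      ((log (1 - y) - 2 * log (1 + y)) * ((1 + y) / (y * (1 - y)))) y := by
  have hy : |y| < 1 := by rwa [abs_of_pos h0]
  have h1y : 0 < 1 - y := by linarith
  have h2y : 0 < 1 + y := by linarith
  have hlog := hasDerivAt_log_one_sub h1.ne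
  refine (((((hasDerivAt_Li2 hy h0.ne').neg.add
    ((hasDerivAt_Li2_comp (hasDerivAt_neg' y) (by rwa [abs_neg])
      (neg_ne_zero.2 h0.ne')).const_mul 2)).sub (hlog.fun_pow 2)).sub
    (((hasDerivAt_Li2_comp (((hasDerivAt_id' y).const_sub 1).div_const 2)
      (by rw [abs_of_pos (by positivity)]; linarith) (by positivity)).sub
      (hlog.const_mul (log 2))).const_mul 4))).congr_deriv ?_
  rw [sub_neg_eq_add, show 1 - (1 - y) / 2 = (1 + y) / 2 by ring, log_div h2y.ne' two_ne_zero]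
  field_simp
  ring

lemma continuousOn_dilogPrimitive : ContinuousOn dilogPrimitive (Ico 0 1) := by
  have hlog : ContinuousOn (fun y : ℝ => log (1 - y)) (Ico 0 1) :=
    ContinuousOn.log (by fun_prop) fun y hy => by linarith [hy.2]
  refine ((((continuousOn_Li2.mono ?_).neg.add (continuousOn_const.mul
    (continuousOn_Li2_comp (by fun_prop) ?_))).sub (hlog.pow 2)).sub
    (continuousOn_const.mul ((continuousOn_Li2_comp (by fun_prop) ?_).sub
      (continuousOn_const.mul hlog))))
  all_goals
    rintro y ⟨hy0, hy1⟩
    constructor <;> linarith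

lemma hasDerivAt_dilogPrimitive_one_sub_div_one_add {c : ℝ} (h0 : 0 < c) (h1 : c < 1) :
    HasDerivAt (fun c => dilogPrimitive ((1 - c) / (1 + c)))
      (-2 * log (c * (1 + c) / 2) / (c * (1 - c ^ 2))) c := by
  have h1c : 0 < 1 - c := by linarith
  have hsq : 1 - c ^ 2 = (1 - c) * (1 + c) := by ring
  refine ((hasDerivAt_dilogPrimitive (by positivity) (one_sub_div_one_add_lt_one h0)).comp c
    (hasDerivAt_one_sub_div_one_add (by linarith))).congr_deriv ?_
  have hlog : log (c * (1 + c) / 2) = log (2 * c / (1 + c)) - 2 * log (2 / (1 + c)) := by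
    have hpow := Real.log_pow (2 / (1 + c)) 2
    push_cast at hpow
    rw [← hpow, ← log_div (by positivity) (by positivity)]
    congr 1
    field_simp
  rw [show 1 - (1 - c) / (1 + c) = 2 * c / (1 + c) by field_simp; ring,
    show 1 + (1 - c) / (1 + c) = 2 / (1 + c) by field_simp; ring, hlog, hsq]
  field_simp

lemma one_sub_cos_div_one_add_cos_mem_Ico {α : ℝ} (h0 : 0 ≤ α) (h1 : α < π / 2) :
    (1 - cos α) / (1 + cos α) ∈ Ico 0 1 := by
  have hcos : 0 < cos α := cos_pos_of_mem_Ioo ⟨by linarith [pi_pos], h1⟩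
  exact ⟨div_nonneg (by linarith [cos_le_one α]) (by positivity), one_sub_div_one_add_lt_one hcos⟩

lemma hasDerivAt_dilogPrimitive_cos_half {θ : ℝ} (h0 : 0 < θ) (h1 : θ < π) :
    HasDerivAt (fun θ => -dilogPrimitive ((1 - cos (θ / 2)) / (1 + cos (θ / 2))))
      (-2 * log (cos (θ / 2) * (1 + cos (θ / 2)) / 2) / sin θ) θ := by
  have hc : 0 < cos (θ / 2) := cos_pos_of_mem_Ioo ⟨by linarith, by linarith⟩
  have hs : 0 < sin (θ / 2) := sin_pos_of_pos_of_lt_pi (by linarith) (by linarith)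
  have hc1 : cos (θ / 2) < 1 := by nlinarith [sin_sq_add_cos_sq (θ / 2)]
  refine ((hasDerivAt_dilogPrimitive_one_sub_div_one_add hc hc1).comp θ
    ((hasDerivAt_id' θ).div_const 2).cos).neg.congr_deriv ?_
  rw [← sin_sq, show sin θ = 2 * sin (θ / 2) * cos (θ / 2) by rw [← sin_two_mul]; ring_nf]
  field_simp

lemma integral_log_cos_half_div_sin {φ : ℝ} (h0 : 0 ≤ φ) (h1 : φ < π) :
    ∫ θ in 0..φ, -2 * log (cos (θ / 2) * (1 + cos (θ / 2)) / 2) / sin θ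
      = dilogPrimitive 0 - dilogPrimitive ((1 - cos (φ / 2)) / (1 + cos (φ / 2))) := by
  have hcont : ContinuousOn
      (fun θ => -dilogPrimitive ((1 - cos (θ / 2)) / (1 + cos (θ / 2)))) (Icc 0 φ) := by
    refine (continuousOn_dilogPrimitive.comp (ContinuousOn.div (by fun_prop) (by fun_prop)
      fun θ hθ => ?_) fun θ hθ => one_sub_cos_div_one_add_cos_mem_Ico (by linarith [hθ.1])
        (by linarith [hθ.2])).neg
    have := cos_pos_of_mem_Ioo (x := θ / 2) ⟨by linarith [hθ.1, pi_pos], by linarith [hθ.2]⟩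
    positivity
  have hderiv (θ : ℝ) (hθ : θ ∈ Ioo 0 φ) :=
    hasDerivAt_dilogPrimitive_cos_half hθ.1 (hθ.2.trans h1)
  have hnonneg (θ : ℝ) (hθ : θ ∈ Ioo 0 φ) :
      0 ≤ -2 * log (cos (θ / 2) * (1 + cos (θ / 2)) / 2) / sin θ := by
    obtain ⟨hθ0, hθφ⟩ := hθ
    have hc : 0 < cos (θ / 2) := cos_pos_of_mem_Ioo ⟨by linarith, by linarith⟩
    have hlog := log_nonpos (x := cos (θ / 2) * (1 + cos (θ / 2)) / 2) (by positivity)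
      (by nlinarith [cos_le_one (θ / 2)])
    exact div_nonneg (by linarith) (sin_nonneg_of_nonneg_of_le_pi hθ0.le (by linarith))
  have hint := intervalIntegral.intervalIntegrable_deriv_of_nonneg (by rwa [uIcc_of_le h0])
    (by rwa [min_eq_left h0, max_eq_right h0]) (by rwa [min_eq_left h0, max_eq_right h0])
  rw [intervalIntegral.integral_eq_sub_of_hasDerivAt_of_le h0 hcont hderiv hint]
  norm_num
  ring

lemma tsum_invSqrtCoeff_mul_sin_pow {θ : ℝ} (h0 : 0 < θ) (h1 : θ < π / 2) :
    ∑' n : ℕ, invSqrtCoeff (2 * n + 2) / (n + 1) * sin θ ^ (2 * n + 1)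
      = -2 * log (cos (θ / 2) * (1 + cos (θ / 2)) / 2) / sin θ := by
  have hs : 0 < sin θ := sin_pos_of_pos_of_lt_pi h0 (by linarith)
  have hs1 : sin θ < 1 := by
    simpa using sin_lt_sin_of_lt_of_le_pi_div_two (by linarith) le_rfl h1
  have hd : sin θ = 2 * sin (θ / 2) * cos (θ / 2) := by rw [← sin_two_mul]; ring_nf
  have hsc : sin (θ / 2) ≤ cos (θ / 2) := by
    rw [← sin_pi_div_two_sub]
    exact sin_le_sin_of_le_of_le_pi_div_two (by linarith) (by linarith) (by linarith)
  have hs2 : 0 ≤ sin (θ / 2) := sin_nonneg_of_nonneg_of_le_pi (by linarith) (by linarith)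
  have hsq := sin_sq_add_cos_sq (θ / 2)
  have hsub : √(1 - sin θ) = cos (θ / 2) - sin (θ / 2) := by
    rw [show 1 - sin θ = (cos (θ / 2) - sin (θ / 2)) ^ 2 by rw [hd]; linear_combination -hsq]
    exact sqrt_sq (by linarith)
  have hadd : √(1 + sin θ) = cos (θ / 2) + sin (θ / 2) := by
    rw [show 1 + sin θ = (cos (θ / 2) + sin (θ / 2)) ^ 2 by rw [hd]; linear_combination -hsq]
    exact sqrt_sq (by linarith)
  have hsum := hasSum_invSqrtCoeff_even_div (x := sin θ) (by rwa [abs_of_pos hs])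
  rw [hsub, hadd, show (1 + (cos (θ / 2) - sin (θ / 2))) * (1 + (cos (θ / 2) + sin (θ / 2))) / 4
    = cos (θ / 2) * (1 + cos (θ / 2)) / 2 by linear_combination -hsq / 4] at hsum
  rw [← (hsum.div_const (sin θ)).tsum_eq]
  refine tsum_congr fun n => ?_
  rw [pow_succ _ (2 * n + 1)]
  field_simp

lemma integral_tsum_invSqrtCoeff_mul_sin_pow :
    ∫ θ in 0..π / 2, ∑' n : ℕ, invSqrtCoeff (2 * n + 2) / (n + 1) * sin θ ^ (2 * n + 1)
      = dilogPrimitive 0 - dilogPrimitive (3 - 2 * √2) := by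
  have htan : (1 - √2 / 2) / (1 + √2 / 2) = 3 - 2 * √2 := by
    rw [div_eq_iff (by positivity)]
    linear_combination sq_sqrt (zero_le_two (α := ℝ))
  rw [intervalIntegral.integral_congr_Ioo_of_le (by positivity)
    fun θ hθ => tsum_invSqrtCoeff_mul_sin_pow hθ.1 hθ.2,
    integral_log_cos_half_div_sin (by positivity) (by linarith [pi_pos]),
    show π / 2 / 2 = π / 4 by ring, cos_pi_div_four, htan]

lemma dilogPrimitive_zero_sub_dilogPrimitive :
    dilogPrimitive 0 - dilogPrimitive (3 - 2 * √2)
      = -Li2 (3 - 2 * √2) + π ^ 2 / 12 - log 2 ^ 2 - log (√2 + 1) ^ 2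
        + 2 * log (√2 + 1) * log 2 := by
  have h2 : √2 ^ 2 = 2 := sq_sqrt zero_le_two
  have hpos : 0 < √2 - 1 := by linarith [one_lt_sqrt_two]
  have hsq : (√2 - 1) ^ 2 = 3 - 2 * √2 := by linear_combination h2
  have hlog : log (√2 - 1) = -log (√2 + 1) := by
    rw [← log_inv]
    congr 1
    exact eq_inv_of_mul_eq_one_left (by linear_combination h2)
  have hlog1 : log (1 - (3 - 2 * √2)) = log 2 - log (√2 + 1) := by
    rw [show 1 - (3 - 2 * √2) = 2 * (√2 - 1) by ring, log_mul two_ne_zero hpos.ne', hlog]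
    ring
  have hLi2 := two_mul_Li2_add_Li2_sq_sub_Li2_neg_sq hpos (by linear_combination h2)
  rw [hsq, hlog] at hLi2
  simp only [dilogPrimitive]
  rw [hlog1, show (1 - (3 - 2 * √2)) / 2 = √2 - 1 by ring, neg_zero, sub_zero, log_one, Li2_zero,
    Li2_half]
  linear_combination 2 * hLi2

end Evaluation

section Series

open Real

lemma fiveF4_summand_eq (n : ℕ) :
    (poch 1 n)^3 * poch (5/4) n * poch (7/4) n
        / (poch (3/2) n * poch (3/2) n * poch 2 n * poch 2 n * (Nat.factorial n))
      = 8 / 3 * (invSqrtCoeff (2 * n + 2) / (n + 1) * (n.factorial / poch (3 / 2) n)) := by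
  have := poch_pos (a := 3 / 2) (by norm_num) n
  rw [poch_one, poch_two, invSqrtCoeff_two_mul_add_two, Nat.factorial_succ]
  push_cast
  field_simp

lemma summable_invSqrtCoeff_mul_wallis :
    Summable fun n : ℕ => invSqrtCoeff (2 * n + 2) / (n + 1) * (n.factorial / poch (3 / 2) n) := by
  refine summable_one_div_succ_sq.of_nonneg_of_le (fun n => ?_) fun n => ?_
  · exact mul_nonneg (div_nonneg (invSqrtCoeff_nonneg _) (by positivity))
      (div_nonneg (by positivity) (poch_pos (by norm_num) n).le)
  · have hle := poch_mul_poch_le_sq (a := 5 / 4) (b := 7 / 4) (by norm_num) (by norm_num) n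
    rw [show ((5 : ℝ) / 4 + 7 / 4) / 2 = 3 / 2 by norm_num] at hle
    have hpos := poch_pos (a := 3 / 2) (by norm_num) n
    rw [invSqrtCoeff_two_mul_add_two, Nat.factorial_succ]
    push_cast
    field_simp
    linarith [sq_nonneg (poch (3 / 2) n)]

lemma hasSum_invSqrtCoeff_mul_wallis :
    HasSum (fun n : ℕ => invSqrtCoeff (2 * n + 2) / (n + 1) * (n.factorial / poch (3 / 2) n))
      (-Li2 (3 - 2 * √2) + π ^ 2 / 12 - log 2 ^ 2 - log (√2 + 1) ^ 2
        + 2 * log (√2 + 1) * log 2) := by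
  rw [← dilogPrimitive_zero_sub_dilogPrimitive, ← integral_tsum_invSqrtCoeff_mul_sin_pow]
  exact hasSum_integral_tsum_sin_pow_odd summable_invSqrtCoeff_mul_wallis

end Series

theorem fiveF4_value :
    ∑' n : ℕ,
        (poch 1 n)^3 * poch (5/4) n * poch (7/4) n
          / (poch (3/2) n * poch (3/2) n * poch 2 n * poch 2 n * (Nat.factorial n)) =
      -(8/3) * Li2 (3 - 2 * Real.sqrt 2) + 2 * Real.pi^2 / 9
        - (8/3) * (Real.log 2)^2
        - (8/3) * (Real.log (Real.sqrt 2 + 1))^2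
        + (16/3) * Real.log (Real.sqrt 2 + 1) * Real.log 2 := by
  simp only [fiveF4_summand_eq]
  rw [(hasSum_invSqrtCoeff_mul_wallis.mul_left (8 / 3)).tsum_eq]
  ring
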